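/- For positive integers b and c, the symmetrical antitree AT(1,b,c,b,1) (which has diameter 4) is Bonnet-Myers sharp if and only if c=b+2. -/

import Mathlib

open scoped Classical
open Finset

noncomputable section

/-- The degree of a vertex `x` in the graph `G`. -/
def deg {V : Type*} [Fintype V] (G : SimpleGraph V) (x : V) : ℕ :=
  (Finset.univ.filter (fun y => G.Adj x y)).card

/-- The diameter of `G`: the maximum of the combinatorial distance over all pairs of vertices. -/
def diam {V : Type*} [Fintype V] (G : SimpleGraph V) : ℕ :=
  Finset.univ.sup (fun xy : V × V => G.dist xy.1 xy.2)

/-- The probability measure `μ_x^p` of the lazy simple random walk at `x` with idleness `p`. -/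
def mu {V : Type*} [Fintype V] (G : SimpleGraph V) (p : ℝ) (x : V) : V → ℝ :=
  fun z => if z = x then p else if G.Adj x z then (1 - p) / (deg G x : ℝ) else 0

/-- The Wasserstein distance `W₁(μ₁, μ₂)` with respect to the combinatorial distance of `G`:
the infimum of the total transport cost over all transport plans from `μ₁` to `μ₂`. -/
def W1 {V : Type*} [Fintype V] (G : SimpleGraph V) (μ₁ μ₂ : V → ℝ) : ℝ :=
  sInf {c : ℝ | ∃ π : V → V → ℝ,
    (∀ x y, 0 ≤ π x y ∧ π x y ≤ 1) ∧
    (∀ x, ∑ y, π x y = μ₁ x) ∧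
    (∀ y, ∑ x, π x y = μ₂ y) ∧
    c = ∑ x, ∑ y, (G.dist x y : ℝ) * π x y}

/-- The `p`-Ollivier-Ricci curvature `κ_p(x,y) = 1 - W₁(μ_x^p, μ_y^p)`. -/
def kappa {V : Type*} [Fintype V] (G : SimpleGraph V) (p : ℝ) (x y : V) : ℝ :=
  1 - W1 G (mu G p x) (mu G p y)

/-- The Lin-Lu-Yau curvature `κ_LLY(x,y) = lim_{p→1} κ_p(x,y)/(1-p)`. -/
def kappaLLY {V : Type*} [Fintype V] (G : SimpleGraph V) (x y : V) : ℝ :=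
  Filter.limUnder (nhdsWithin 1 (Set.Iio 1)) (fun p => kappa G p x y / (1 - p))

/-- `G` is Bonnet-Myers sharp if the infimum of `κ_LLY` over the edges equals `2/diam(G)`. -/
def BMSharp {V : Type*} [Fintype V] (G : SimpleGraph V) : Prop :=
  sInf {r : ℝ | ∃ x y, G.Adj x y ∧ r = kappaLLY G x y} = 2 / (diam G : ℝ)

/-- `G` is obtained from the complete graph on its vertex set by deleting a matching
(a set of pairwise disjoint edges, encoded as a symmetric irreflexive relation in which
every vertex has at most one partner). -/
def IsMatchingDeletionOfComplete {V : Type*} (G : SimpleGraph V) : Prop :=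
  ∃ M : V → V → Prop, Symmetric M ∧ (∀ x, ¬ M x x) ∧
    (∀ x y z, M x y → M x z → y = z) ∧
    (∀ x y, G.Adj x y ↔ x ≠ y ∧ ¬ M x y)

/-- The graph `G(a,b)` on `2a+b` vertices `u_1, …, u_{2a}, v_1, …, v_b` (encoded as
`Fin (2a+b)`, with `u_i` the index `i-1` and `v_j` the index `2a+j-1`), in which two distinct
vertices are adjacent unless they form a pair `{u_{2i-1}, u_{2i}}`, i.e. `G(a,b)` is the
complete graph `K_{2a+b}` with a matching of size `a` deleted. -/
def Gab (a b : ℕ) : SimpleGraph (Fin (2*a+b)) where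
  Adj x y := x ≠ y ∧ ¬((x : ℕ) < 2*a ∧ (y : ℕ) < 2*a ∧ (x : ℕ)/2 = (y : ℕ)/2)
  symm := by
    constructor
    intro x y h
    exact ⟨h.1.symm, fun hc => h.2 ⟨hc.2.1, hc.1, hc.2.2.symm⟩⟩
  loopless := by constructor; intro x h; exact h.1 rfl

/-- The antitree `AT(a_1, …, a_N)` on the disjoint union of sets `V_1, …, V_N` with
`|V_k| = a_k` (0-indexed here: `V_k` is `Fin (a k)` for `k : Fin N`): two distinct vertices
are adjacent iff they lie in the same set or in consecutive sets. -/
def antitree (N : ℕ) (a : Fin N → ℕ) : SimpleGraph (Σ k : Fin N, Fin (a k)) where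
  Adj x y := x ≠ y ∧
    ((x.1 : ℕ) = (y.1 : ℕ) ∨ (x.1 : ℕ) + 1 = (y.1 : ℕ) ∨ (y.1 : ℕ) + 1 = (x.1 : ℕ))
  symm := by
    constructor
    intro x y h
    refine ⟨h.1.symm, ?_⟩
    rcases h.2 with h2 | h2 | h2
    · exact Or.inl h2.symm
    · exact Or.inr (Or.inr h2)
    · exact Or.inr (Or.inl h2)
  loopless := by constructor; intro x h; exact h.1 rfl

section General

variable {V : Type*} [Fintype V] (G : SimpleGraph V)

lemma sum_mul_mu (p : ℝ) (x : V) (f : V → ℝ) :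
    ∑ z, f z * mu G p x z
      = p * f x + (1 - p) / (deg G x : ℝ) * ∑ z, (if G.Adj x z then f z else 0) := by
  have h : ∀ z, f z * mu G p x z = (if z = x then p * f x else 0)
      + (1 - p) / (deg G x : ℝ) * (if G.Adj x z then f z else 0) := by
    intro z
    unfold mu
    by_cases hz : z = x
    · subst hz; simp; ring
    · by_cases ha : G.Adj x z
      · simp [hz, ha]; ring
      · simp [hz, ha]
  rw [Finset.sum_congr rfl (fun z _ => h z), Finset.sum_add_distrib, ← Finset.mul_sum]
  simp

lemma sum_adj_one (x : V) : ∑ z, (if G.Adj x z then (1 : ℝ) else 0) = deg G x := by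
  simp [deg]

lemma deg_pos' {x y : V} (h : G.Adj x y) : (0 : ℝ) < deg G x := by
  unfold deg
  have : 0 < (Finset.univ.filter (fun y => G.Adj x y)).card :=
    Finset.card_pos.mpr ⟨y, by simp [h]⟩
  exact_mod_cast this

lemma sum_mu (p : ℝ) {x y : V} (h : G.Adj x y) : ∑ z, mu G p x z = 1 := by
  have h1 := sum_mul_mu G p x (fun _ => 1)
  have := deg_pos' G h
  rw [sum_adj_one] at h1
  simp only [one_mul, mul_one] at h1
  rw [h1, div_mul_cancel₀ _ this.ne']; ring

lemma mu_nonneg {p : ℝ} (h0 : 0 ≤ p) (h1 : p ≤ 1) (x z : V) : 0 ≤ mu G p x z := by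
  unfold mu
  split_ifs
  · exact h0
  · exact div_nonneg (by linarith) (by positivity)
  · exact le_rfl

/-- costs of plans -/
def costs (μ ν : V → ℝ) : Set ℝ := {c : ℝ | ∃ π : V → V → ℝ,
    (∀ x y, 0 ≤ π x y ∧ π x y ≤ 1) ∧
    (∀ x, ∑ y, π x y = μ x) ∧
    (∀ y, ∑ x, π x y = ν y) ∧
    c = ∑ x, ∑ y, (G.dist x y : ℝ) * π x y}

lemma W1_eq (μ ν : V → ℝ) : W1 G μ ν = sInf (costs G μ ν) := rfl

lemma costs_bdd (μ ν : V → ℝ) : BddBelow (costs G μ ν) := by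
  refine ⟨0, ?_⟩
  rintro c ⟨π, h, -, -, rfl⟩
  exact Finset.sum_nonneg fun x _ => Finset.sum_nonneg fun y _ =>
    mul_nonneg (by positivity) (h x y).1

lemma mem_costs {μ ν : V → ℝ} (π : V → V → ℝ) (hμ1 : ∑ z, μ z = 1) (hμ : ∀ z, 0 ≤ μ z)
    (h0 : ∀ x y, 0 ≤ π x y) (h1 : ∀ x, ∑ y, π x y = μ x) (h2 : ∀ y, ∑ x, π x y = ν y) :
    (∑ x, ∑ y, (G.dist x y : ℝ) * π x y) ∈ costs G μ ν := by
  refine ⟨π, fun x y => ⟨h0 x y, ?_⟩, h1, h2, rfl⟩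
  calc π x y ≤ ∑ y, π x y := Finset.single_le_sum (fun y _ => h0 x y) (Finset.mem_univ y)
    _ = μ x := h1 x
    _ ≤ ∑ z, μ z := Finset.single_le_sum (fun y _ => hμ y) (Finset.mem_univ x)
    _ = 1 := hμ1

lemma costs_nonempty {μ ν : V → ℝ} (hμ1 : ∑ z, μ z = 1) (hμ : ∀ z, 0 ≤ μ z)
    (hν1 : ∑ z, ν z = 1) (hν : ∀ z, 0 ≤ ν z) : (costs G μ ν).Nonempty := by
  refine ⟨_, mem_costs G (fun x y => μ x * ν y) hμ1 hμ
    (fun x y => mul_nonneg (hμ x) (hν y)) (fun x => ?_) (fun y => ?_)⟩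
  · rw [← Finset.mul_sum, hν1, mul_one]
  · rw [← Finset.sum_mul, hμ1, one_mul]

lemma sum_diff {μ ν : V → ℝ} (π : V → V → ℝ) (f : V → ℝ)
    (h1 : ∀ x, ∑ y, π x y = μ x) (h2 : ∀ y, ∑ x, π x y = ν y) :
    ∑ x, ∑ y, (f y - f x) * π x y = ∑ z, f z * ν z - ∑ z, f z * μ z := by
  have e1 : ∑ z, f z * ν z = ∑ x, ∑ y, f y * π x y := by
    rw [Finset.sum_comm]
    exact Finset.sum_congr rfl fun y _ => by rw [← h2, Finset.mul_sum]
  have e2 : ∑ z, f z * μ z = ∑ x, ∑ y, f x * π x y :=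
    Finset.sum_congr rfl fun y _ => by rw [← h1, Finset.mul_sum]
  rw [e1, e2, ← Finset.sum_sub_distrib]
  refine Finset.sum_congr rfl fun x _ => ?_
  rw [← Finset.sum_sub_distrib]
  exact Finset.sum_congr rfl fun y _ => by ring

lemma le_W1 {μ ν : V → ℝ} (hμ1 : ∑ z, μ z = 1) (hμ : ∀ z, 0 ≤ μ z)
    (hν1 : ∑ z, ν z = 1) (hν : ∀ z, 0 ≤ ν z) (f : V → ℝ)
    (hf : ∀ x y, f y - f x ≤ G.dist x y) :
    ∑ z, f z * ν z - ∑ z, f z * μ z ≤ W1 G μ ν := by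
  rw [W1_eq]
  refine le_csInf (costs_nonempty G hμ1 hμ hν1 hν) ?_
  rintro c ⟨π, h, h1, h2, rfl⟩
  rw [← sum_diff π f h1 h2]
  exact Finset.sum_le_sum fun x _ => Finset.sum_le_sum fun y _ =>
    mul_le_mul_of_nonneg_right (hf x y) (h x y).1

lemma W1_le {μ ν : V → ℝ} (hμ1 : ∑ z, μ z = 1) (hμ : ∀ z, 0 ≤ μ z)
    (hν1 : ∑ z, ν z = 1) (hν : ∀ z, 0 ≤ ν z) (f : V → ℝ)
    (hf : ∀ x y, ν x < μ x → μ y < ν y → G.dist x y ≤ f y - f x) :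
    W1 G μ ν ≤ ∑ z, f z * ν z - ∑ z, f z * μ z := by
  set m : V → ℝ := fun z => min (μ z) (ν z) with hm
  set T : ℝ := 1 - ∑ z, m z with hT
  have ha : ∀ z, 0 ≤ μ z - m z := fun z => sub_nonneg.2 (min_le_left _ _)
  have hb : ∀ z, 0 ≤ ν z - m z := fun z => sub_nonneg.2 (min_le_right _ _)
  have hTa : ∑ z, (μ z - m z) = T := by rw [Finset.sum_sub_distrib, hμ1]
  have hTb : ∑ z, (ν z - m z) = T := by rw [Finset.sum_sub_distrib, hν1]
  have hT0 : 0 ≤ T := by rw [← hTa]; exact Finset.sum_nonneg fun z _ => ha z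
  have ha0 : ∀ z, T = 0 → μ z - m z = 0 := fun z h => by
    rw [← hTa] at h
    exact (Finset.sum_eq_zero_iff_of_nonneg (fun z _ => ha z)).1 h z (Finset.mem_univ z)
  have hb0 : ∀ z, T = 0 → ν z - m z = 0 := fun z h => by
    rw [← hTb] at h
    exact (Finset.sum_eq_zero_iff_of_nonneg (fun z _ => hb z)).1 h z (Finset.mem_univ z)
  set π : V → V → ℝ := fun x y => (if x = y then m x else 0)
    + (μ x - m x) * (ν y - m y) / T with hπ
  have h0 : ∀ x y, 0 ≤ π x y := by
    intro x y
    simp only [hπ]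
    refine add_nonneg ?_ (div_nonneg (mul_nonneg (ha x) (hb y)) hT0)
    split_ifs
    · exact le_min (hμ x) (hν x)
    · exact le_rfl
  have h1 : ∀ x, ∑ y, π x y = μ x := by
    intro x
    simp only [hπ]
    rw [Finset.sum_add_distrib, ← Finset.sum_div, ← Finset.mul_sum, hTb]
    rcases eq_or_ne T 0 with h | h
    · have := ha0 x h
      simp [h]; linarith
    · rw [mul_div_cancel_right₀ _ h]; simp
  have h2 : ∀ y, ∑ x, π x y = ν y := by
    intro y
    simp only [hπ]
    rw [Finset.sum_add_distrib, ← Finset.sum_div, ← Finset.sum_mul, hTa]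
    rcases eq_or_ne T 0 with h | h
    · have := hb0 y h
      simp [h]; linarith
    · rw [mul_div_cancel_left₀ _ h]; simp
  rw [W1_eq]
  refine (csInf_le (costs_bdd G _ _) (mem_costs G π hμ1 hμ h0 h1 h2)).trans ?_
  rw [← sum_diff π f h1 h2]
  refine Finset.sum_le_sum fun x _ => Finset.sum_le_sum fun y _ => ?_
  by_cases hxy : x = y
  · subst hxy; simp
  · by_cases hx : ν x < μ x
    · by_cases hy : μ y < ν y
      · exact mul_le_mul_of_nonneg_right (hf x y hx hy) (h0 x y)
      · have : ν y - m y = 0 := by simp [hm, min_eq_right (not_lt.1 hy)]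
        simp [hπ, hxy, this]
    · have : μ x - m x = 0 := by simp [hm, min_eq_left (not_lt.1 hx)]
      simp [hπ, hxy, this]

lemma W1_symm (μ ν : V → ℝ) : W1 G μ ν = W1 G ν μ := by
  have key : ∀ μ ν : V → ℝ, costs G μ ν ⊆ costs G ν μ := by
    rintro μ ν c ⟨π, h, h1, h2, rfl⟩
    refine ⟨fun x y => π y x, fun x y => h y x, h2, h1, ?_⟩
    rw [Finset.sum_comm]
    simp only [G.dist_comm]
  rw [W1_eq, W1_eq, Set.Subset.antisymm (key μ ν) (key ν μ)]

lemma kappaLLY_symm (x y : V) : kappaLLY G x y = kappaLLY G y x := by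
  unfold kappaLLY kappa
  simp only [W1_symm G (mu G _ x) (mu G _ y)]

lemma kappa_mono {x y : V} (h : G.Adj x y) {p q : ℝ} (hp : 0 ≤ p) (hpq : p ≤ q) (hq : q < 1) :
    kappa G p x y / (1 - p) ≤ kappa G q x y / (1 - q) := by
  have hp1 : 0 < 1 - p := by linarith
  have hq1 : 0 < 1 - q := by linarith
  set t : ℝ := (1 - q) / (1 - p) with ht
  have ht0 : 0 < t := div_pos hq1 hp1
  have ht1 : t ≤ 1 := by rw [ht, div_le_one hp1]; linarith
  have htq : t * (1 - p) = 1 - q := by rw [ht]; field_simp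
  have hmu : ∀ w z, mu G q w z = t * mu G p w z + (if z = w then 1 - t else 0) := by
    intro w z
    unfold mu
    split_ifs
    · linarith
    · rw [← htq]; ring
    · ring
  have hW : (W1 G (mu G q x) (mu G q y) - (1 - t)) / t ≤ W1 G (mu G p x) (mu G p y) := by
    rw [W1_eq G (mu G p x)]
    refine le_csInf (costs_nonempty G (sum_mu G p h) (mu_nonneg G hp (by linarith) x)
      (sum_mu G p h.symm) (mu_nonneg G hp (by linarith) y)) ?_
    rintro c ⟨π, hπ, h1, h2, rfl⟩
    rw [div_le_iff₀ ht0, sub_le_iff_le_add, W1_eq]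
    set π' : V → V → ℝ := fun u v => t * π u v + (if u = x then (if v = y then 1 - t else 0) else 0)
      with hπ'
    refine (csInf_le (costs_bdd G _ _) (mem_costs G π' (sum_mu G q h)
      (mu_nonneg G (by linarith) hq.le x) ?_ ?_ ?_)).trans (le_of_eq ?_)
    · intro u v
      have := mul_nonneg ht0.le (hπ u v).1
      simp only [hπ']
      split_ifs <;> linarith
    · intro u
      simp only [hπ', Finset.sum_add_distrib, ← Finset.mul_sum, h1, hmu]
      by_cases hu : u = x <;> simp [hu]
    · intro u
      simp only [hπ', Finset.sum_add_distrib, ← Finset.mul_sum, h2, hmu]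
      by_cases hu : u = y <;> simp [hu]
    · have hd : (G.dist x y : ℝ) = 1 := by
        rw [SimpleGraph.dist_eq_one_iff_adj.2 h]; simp
      have : ∀ u v, (G.dist u v : ℝ) * π' u v = (G.dist u v : ℝ) * π u v * t
          + (if u = x then (if v = y then (G.dist x y : ℝ) * (1 - t) else 0) else 0) := by
        intro u v
        simp only [hπ']
        split_ifs with h1 h2
        · subst h1 h2; ring
        · ring
        · ring
      simp only [this, Finset.sum_add_distrib, Finset.sum_mul]
      simp [hd]
  rw [div_le_iff₀ ht0] at hW
  unfold kappa
  rw [div_le_div_iff₀ hp1 hq1, ← htq]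
  nlinarith

lemma lip_of_adj (hG : G.Connected) (f : V → ℝ) (hf : ∀ x y, G.Adj x y → f y - f x ≤ 1) (x y : V) :
    f y - f x ≤ G.dist x y := by
  obtain ⟨w, hw⟩ := hG.exists_walk_length_eq_dist x y
  rw [← hw]
  clear hw
  induction w with
  | nil => simp
  | cons h w ih =>
    have := hf _ _ h
    simp only [SimpleGraph.Walk.length_cons]
    push_cast
    linarith

/-- discrete Laplacian -/
def lap (f : V → ℝ) (x : V) : ℝ :=
  (∑ z, (if G.Adj x z then f z else 0)) / (deg G x : ℝ) - f x

lemma sum_mul_mu' (p : ℝ) (x : V) (f : V → ℝ) :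
    ∑ z, f z * mu G p x z = f x + (1 - p) * lap G f x := by
  rw [sum_mul_mu, lap]; ring

lemma kappa_le {x y : V} (h : G.Adj x y) {p : ℝ} (hp : 0 ≤ p) (hp1 : p < 1) (f : V → ℝ)
    (hf : ∀ x y, f y - f x ≤ G.dist x y) (hxy : f y - f x = 1) :
    kappa G p x y / (1 - p) ≤ lap G f x - lap G f y := by
  have := le_W1 G (sum_mu G p h) (mu_nonneg G hp hp1.le x)
      (sum_mu G p h.symm) (mu_nonneg G hp hp1.le y) f hf
  rw [sum_mul_mu', sum_mul_mu'] at this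
  rw [div_le_iff₀ (by linarith), kappa]
  linarith

lemma kappa_tendsto (hG : G.Connected) {x y : V} (h : G.Adj x y) :
    Filter.Tendsto (fun p => kappa G p x y / (1 - p)) (nhdsWithin 1 (Set.Iio 1))
      (nhds (kappaLLY G x y)) := by
  have hb : BddAbove ((fun p => kappa G p x y / (1 - p)) '' Set.Ioo 0 1) := by
    refine ⟨lap G (fun z => G.dist x z) x - lap G (fun z => G.dist x z) y, ?_⟩
    rintro _ ⟨p, hp, rfl⟩
    refine kappa_le G h hp.1.le hp.2 _ ?_ ?_
    · intro u v
      have := hG.dist_triangle (u := x) (v := u) (w := v)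
      have : (G.dist x v : ℝ) ≤ G.dist x u + G.dist u v := by exact_mod_cast this
      linarith
    · simp [SimpleGraph.dist_eq_one_iff_adj.2 h]
  have hm : MonotoneOn (fun p => kappa G p x y / (1 - p)) (Set.Ioo 0 1) :=
    fun p hp q hq hpq => kappa_mono G h hp.1.le hpq hq.2
  exact tendsto_nhds_limUnder ⟨_, hm.tendsto_nhdsWithin_Ioo_left ⟨1/2, by norm_num⟩ hb⟩

lemma kappaLLY_le (hG : G.Connected) {x y : V} (h : G.Adj x y) (f : V → ℝ)
    (hf : ∀ x y, f y - f x ≤ G.dist x y) (hxy : f y - f x = 1) :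
    kappaLLY G x y ≤ lap G f x - lap G f y := by
  refine le_of_tendsto (kappa_tendsto G hG h) ?_
  filter_upwards [Ioo_mem_nhdsLT (zero_lt_one (α := ℝ))] with p hp
  exact kappa_le G h hp.1.le hp.2 f hf hxy

lemma le_kappaLLY (hG : G.Connected) {x y : V} (h : G.Adj x y) {p : ℝ} (hp : 0 ≤ p) (hp1 : p < 1) :
    kappa G p x y / (1 - p) ≤ kappaLLY G x y := by
  refine ge_of_tendsto (kappa_tendsto G hG h) ?_
  filter_upwards [Ioo_mem_nhdsLT hp1] with q hq
  exact kappa_mono G h hp hq.1.le hq.2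

lemma le_kappaLLY' (hG : G.Connected) {x y : V} (h : G.Adj x y) {p : ℝ} (hp : 0 ≤ p) (hp1 : p < 1)
    (f : V → ℝ) (hxy : f y - f x = 1)
    (hf : ∀ u v, mu G p y u < mu G p x u → mu G p x v < mu G p y v → G.dist u v ≤ f v - f u) :
    lap G f x - lap G f y ≤ kappaLLY G x y := by
  refine le_trans ?_ (le_kappaLLY G hG h hp hp1)
  have := W1_le G (sum_mu G p h) (mu_nonneg G hp hp1.le x)
      (sum_mu G p h.symm) (mu_nonneg G hp hp1.le y) f hf
  rw [sum_mul_mu', sum_mul_mu'] at this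
  rw [le_div_iff₀ (by linarith), kappa]
  linarith

/-- twins have curvature at least one -/
lemma one_le_of_twin (hG : G.Connected) {x y : V} (h : G.Adj x y)
    (ht : ∀ z, z ≠ x → z ≠ y → (G.Adj x z ↔ G.Adj y z)) (hd : deg G x = deg G y) :
    1 ≤ kappaLLY G x y := by
  have hdp := deg_pos' G h
  set d : ℝ := ((deg G x : ℕ) : ℝ) with hdd
  have hp : (0 : ℝ) ≤ 1 / (d + 1) := by positivity
  have hp1 : 1 / (d + 1) < 1 := by rw [div_lt_one (by positivity)]; linarith
  have he : (1 - 1 / (d + 1)) / d = 1 / (d + 1) := by field_simp; ring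
  have hmu : mu G (1 / (d + 1)) x = mu G (1 / (d + 1)) y := by
    funext z
    unfold mu
    rw [← hd, ← hdd, he]
    by_cases hx : z = x
    · subst hx; simp [h.symm]
    · by_cases hy : z = y
      · subst hy; simp [h]
      · simp [hx, hy, ht z hx hy]
  refine le_trans ?_ (le_kappaLLY G hG h hp hp1)
  have := W1_le G (sum_mu G _ h) (mu_nonneg G hp hp1.le x)
      (sum_mu G _ h.symm) (mu_nonneg G hp hp1.le y) (fun _ => 0)
      (fun u v h1 _ => by rw [hmu] at h1; exact absurd h1 (lt_irrefl _))
  simp only [zero_mul, Finset.sum_const_zero, sub_zero] at this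
  rw [le_div_iff₀ (by linarith), kappa]
  linarith

end General

section AT

/-- same or consecutive levels -/
def near (i j : ℕ) : Prop := i = j ∨ i + 1 = j ∨ j + 1 = i

lemma at_adj {N : ℕ} {a : Fin N → ℕ} (x y : Σ k : Fin N, Fin (a k)) :
    (antitree N a).Adj x y ↔ x ≠ y ∧ near x.1 y.1 := Iff.rfl

lemma sum_level {N : ℕ} {a : Fin N → ℕ} (x : Σ k : Fin N, Fin (a k)) (h : Fin N → ℝ) :
    ∑ z, (if (antitree N a).Adj x z then h z.1 else 0)
      = (∑ k : Fin N, if near x.1 k then (a k : ℝ) * h k else 0) - h x.1 := by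
  have e : ∀ z : (Σ k : Fin N, Fin (a k)), (if (antitree N a).Adj x z then h z.1 else 0)
      = (if near x.1 z.1 then h z.1 else 0) - (if z = x then h x.1 else 0) := by
    intro z
    rw [at_adj]
    by_cases hz : z = x
    · subst hz; simp [near]
    · simp [hz, Ne.symm hz]
  rw [Finset.sum_congr rfl (fun z _ => e z), Finset.sum_sub_distrib, Fintype.sum_sigma]
  congr 1
  · refine Finset.sum_congr rfl fun k _ => ?_
    split_ifs <;> simp
  · simp

lemma at_walk {N : ℕ} {a : Fin N → ℕ} (ha : ∀ k, 0 < a k) (n : ℕ) :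
    ∀ u v : (Σ k : Fin N, Fin (a k)), (u.1 : ℕ) + (n + 1) = v.1 →
      ∃ w : (antitree N a).Walk u v, w.length = n + 1 := by
  induction n with
  | zero =>
    intro u v h
    have : (antitree N a).Adj u v := by
      rw [at_adj]
      refine ⟨?_, Or.inr (Or.inl h)⟩
      rintro rfl; omega
    exact ⟨this.toWalk, by simp⟩
  | succ n ih =>
    intro u v h
    have hv := v.1.2
    let u' : (Σ k : Fin N, Fin (a k)) := ⟨⟨u.1 + 1, by omega⟩, ⟨0, ha _⟩⟩
    have hu' : (u'.1 : ℕ) = u.1 + 1 := rfl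
    obtain ⟨w, hw⟩ := ih u' v (by omega)
    have : (antitree N a).Adj u u' := by
      rw [at_adj]
      refine ⟨?_, Or.inr (Or.inl hu'.symm)⟩
      intro hh
      rw [← hh] at hu'; omega
    exact ⟨SimpleGraph.Walk.cons this w, by simp [hw]⟩

lemma at_dist {N : ℕ} {a : Fin N → ℕ} (ha : ∀ k, 0 < a k) (u v : (Σ k : Fin N, Fin (a k)))
    (h : (u.1 : ℕ) < v.1) : (antitree N a).dist u v + u.1 ≤ v.1 := by
  obtain ⟨w, hw⟩ := at_walk ha (v.1 - u.1 - 1) u v (by omega)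
  have := SimpleGraph.dist_le w
  omega

lemma at_conn {N : ℕ} {a : Fin N → ℕ} (ha : ∀ k, 0 < a k) (hN : 0 < N) :
    (antitree N a).Connected := by
  have : Nonempty (Σ k : Fin N, Fin (a k)) := ⟨⟨⟨0, hN⟩, ⟨0, ha _⟩⟩⟩
  refine ⟨fun u v => ?_⟩
  rcases lt_trichotomy (u.1 : ℕ) v.1 with h | h | h
  · obtain ⟨w, -⟩ := at_walk ha (v.1 - u.1 - 1) u v (by omega)
    exact ⟨w⟩
  · by_cases huv : u = v
    · subst huv; exact SimpleGraph.Reachable.refl _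
    · exact SimpleGraph.Adj.reachable ((at_adj u v).2 ⟨huv, Or.inl h⟩)
  · obtain ⟨w, -⟩ := at_walk ha (u.1 - v.1 - 1) v u (by omega)
    exact ⟨w.reverse⟩

lemma at_lip {N : ℕ} {a : Fin N → ℕ} (ha : ∀ k, 0 < a k) (hN : 0 < N) (s : ℝ)
    (hs : s = 1 ∨ s = -1) (u v : (Σ k : Fin N, Fin (a k))) :
    s * ((v.1 : ℕ) : ℝ) - s * ((u.1 : ℕ) : ℝ) ≤ (antitree N a).dist u v := by
  refine lip_of_adj _ (at_conn ha hN) (fun z => s * ((z.1 : ℕ) : ℝ)) ?_ u v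
  intro x y h
  rcases ((at_adj x y).1 h).2 with h | h | h
  · simp [h]
  · rw [← h]; push_cast; rcases hs with rfl | rfl <;> linarith
  · rw [← h]; push_cast; rcases hs with rfl | rfl <;> linarith

variable {b c : ℕ}

/-- vertex type -/
abbrev AV (b c : ℕ) := Σ k : Fin 5, Fin ((![1, b, c, b, 1] : Fin 5 → ℕ) k)

/-- the graph -/
abbrev AG (b c : ℕ) : SimpleGraph (AV b c) := antitree 5 ![1, b, c, b, 1]

lemma a_pos (hb : 0 < b) (hc : 0 < c) : ∀ k, 0 < (![1, b, c, b, 1] : Fin 5 → ℕ) k := by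
  intro k
  fin_cases k <;> simp [hb, hc]

lemma diam_AG (hb : 0 < b) (hc : 0 < c) : diam (AG b c) = 4 := by
  have ha := a_pos hb hc
  unfold diam
  apply le_antisymm
  · refine Finset.sup_le ?_
    rintro ⟨u, v⟩ -
    have hu := u.1.2
    have hv := v.1.2
    show (AG b c).dist u v ≤ 4
    rcases lt_trichotomy (u.1 : ℕ) v.1 with h | h | h
    · have : (AG b c).dist u v + u.1 ≤ v.1 := at_dist ha u v h
      omega
    · by_cases huv : u = v
      · subst huv; simp
      · have : (AG b c).dist u v = 1 := SimpleGraph.dist_eq_one_iff_adj.2 ((at_adj u v).2 ⟨huv, Or.inl h⟩)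
        omega
    · have : (AG b c).dist v u + v.1 ≤ u.1 := at_dist ha v u h
      rw [SimpleGraph.dist_comm]; omega
  · let u : AV b c := ⟨0, ⟨0, ha 0⟩⟩
    let v : AV b c := ⟨4, ⟨0, ha 4⟩⟩
    have h := at_lip ha (by norm_num) 1 (Or.inl rfl) u v
    have hu : ((u.1 : ℕ) : ℝ) = 0 := by simp [u]
    have hv : ((v.1 : ℕ) : ℝ) = 4 := by simp [v]
    rw [hu, hv] at h
    have h4 : 4 ≤ (AG b c).dist u v := by
      have : (4 : ℝ) ≤ (AG b c).dist u v := by linarith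
      exact_mod_cast this
    exact h4.trans (Finset.le_sup (f := fun xy : AV b c × AV b c => (AG b c).dist xy.1 xy.2)
      (Finset.mem_univ (u, v)))

/-- level function -/
def lev (z : AV b c) : ℝ := ((z.1 : ℕ) : ℝ)

lemma deg_AG (x : AV b c) : (deg (AG b c) x : ℝ) =
    (∑ k : Fin 5, if near x.1 k then ((![1, b, c, b, 1] : Fin 5 → ℕ) k : ℝ) * 1 else 0) - 1 := by
  rw [← sum_adj_one]
  exact sum_level x (fun _ => 1)

lemma lev_AG (x : AV b c) : ∑ z, (if (AG b c).Adj x z then lev z else 0) =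
    (∑ k : Fin 5, if near x.1 k then ((![1, b, c, b, 1] : Fin 5 → ℕ) k : ℝ) * ((k : ℕ) : ℝ) else 0)
      - lev x :=
  sum_level x (fun k => ((k : ℕ) : ℝ))

lemma deg0 (x : AV b c) (h : (x.1 : ℕ) = 0 ∨ (x.1 : ℕ) = 4) : (deg (AG b c) x : ℝ) = b := by
  rw [deg_AG]
  rcases h with h | h <;> rw [h] <;> simp [Fin.sum_univ_succ, near]

lemma deg1 (x : AV b c) (h : (x.1 : ℕ) = 1 ∨ (x.1 : ℕ) = 3) : (deg (AG b c) x : ℝ) = b + c := by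
  rw [deg_AG]
  rcases h with h | h <;> rw [h] <;> simp [Fin.sum_univ_succ, near] <;> ring

lemma deg2 (x : AV b c) (h : (x.1 : ℕ) = 2) : (deg (AG b c) x : ℝ) = 2 * b + c - 1 := by
  rw [deg_AG, h]
  simp [Fin.sum_univ_succ, near]; ring

lemma lap0 (hb : 0 < b) (x : AV b c) (h : (x.1 : ℕ) = 0) : lap (AG b c) lev x = 1 := by
  have hb' : (0 : ℝ) < b := by exact_mod_cast hb
  rw [lap, deg0 x (Or.inl h), lev_AG, lev, h]
  simp [Fin.sum_univ_succ, near, hb.ne']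

lemma lap4 (hb : 0 < b) (x : AV b c) (h : (x.1 : ℕ) = 4) : lap (AG b c) lev x = -1 := by
  have hb' : (0 : ℝ) < b := by exact_mod_cast hb
  rw [lap, deg0 x (Or.inr h), lev_AG, lev, h]
  simp [Fin.sum_univ_succ, near]
  field_simp
  ring

lemma lap1 (hb : 0 < b) (x : AV b c) (h : (x.1 : ℕ) = 1) :
    lap (AG b c) lev x = (c - 1) / (b + c) := by
  have hb' : (0 : ℝ) < b := by exact_mod_cast hb
  have : (0 : ℝ) < b + c := by positivity
  rw [lap, deg1 x (Or.inl h), lev_AG, lev, h]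
  simp [Fin.sum_univ_succ, near]
  field_simp
  ring

lemma lap3 (hb : 0 < b) (x : AV b c) (h : (x.1 : ℕ) = 3) :
    lap (AG b c) lev x = - ((c - 1) / (b + c)) := by
  have hb' : (0 : ℝ) < b := by exact_mod_cast hb
  have : (0 : ℝ) < b + c := by positivity
  rw [lap, deg1 x (Or.inr h), lev_AG, lev, h]
  simp [Fin.sum_univ_succ, near]
  field_simp
  ring

lemma lap2 (hb : 0 < b) (hc : 0 < c) (x : AV b c) (h : (x.1 : ℕ) = 2) :
    lap (AG b c) lev x = 0 := by
  have hb' : (1 : ℝ) ≤ b := by exact_mod_cast hb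
  have hc' : (1 : ℝ) ≤ c := by exact_mod_cast hc
  have : (2 * b + c - 1 : ℝ) ≠ 0 := by nlinarith
  rw [lap, deg2 x h, lev_AG, lev, h, sub_eq_zero, div_eq_iff this]
  simp [Fin.sum_univ_succ, near]
  ring

lemma lap_smul {V : Type*} [Fintype V] (G : SimpleGraph V) (s : ℝ) (f : V → ℝ) (x : V) :
    lap G (fun z => s * f z) x = s * lap G f x := by
  unfold lap
  have : ∀ z, (if G.Adj x z then s * f z else 0) = s * (if G.Adj x z then f z else 0) := by
    intro z; split_ifs <;> simp
  simp only [this, ← Finset.mul_sum]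
  ring

lemma mu_far (p : ℝ) (x z : AV b c) (h : ¬ near x.1 z.1) : mu (AG b c) p x z = 0 := by
  have hz : z ≠ x := by rintro rfl; exact h (Or.inl rfl)
  simp [mu, hz, at_adj, h]

lemma mu_near (p : ℝ) (x z : AV b c) (h : near x.1 z.1) :
    mu (AG b c) p x z = if z = x then p else (1 - p) / (deg (AG b c) x : ℝ) := by
  by_cases hz : z = x
  · simp [mu, hz]
  · simp [mu, hz, at_adj, h, Ne.symm hz]

lemma dist_le_lev (hb : 0 < b) (hc : 0 < c) (u v : AV b c) (s : ℝ)
    (h : (s = 1 ∧ (u.1 : ℕ) < v.1) ∨ (s = -1 ∧ (v.1 : ℕ) < u.1)) :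
    ((AG b c).dist u v : ℝ) ≤ s * lev v - s * lev u := by
  have ha := a_pos hb hc
  unfold lev
  rcases h with ⟨rfl, h⟩ | ⟨rfl, h⟩
  · have := at_dist ha u v h
    have : ((AG b c).dist u v : ℝ) + ((u.1 : ℕ) : ℝ) ≤ ((v.1 : ℕ) : ℝ) := by exact_mod_cast this
    linarith
  · have := at_dist ha v u h
    rw [SimpleGraph.dist_comm] at this
    have : ((AG b c).dist u v : ℝ) + ((v.1 : ℕ) : ℝ) ≤ ((u.1 : ℕ) : ℝ) := by exact_mod_cast this
    linarith

/-- orientation of an outward-in pair of levels -/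
def OR (s : ℝ) (i j i' j' k l : ℕ) : Prop :=
  (s = 1 ∧ k = i ∧ l = j) ∨ (s = -1 ∧ k = i' ∧ l = j')

lemma mu1 (hc : c = b + 2) (x z : AV b c) (hx : (x.1 : ℕ) = 1 ∨ (x.1 : ℕ) = 3)
    (h : near x.1 z.1) : mu (AG b c) (1 / (2 * b + 3)) x z = 1 / (2 * b + 3) := by
  rw [mu_near _ _ _ h, deg1 x hx]
  split_ifs
  · rfl
  · rw [hc]; push_cast; field_simp; ring

lemma mu0 (hb : 0 < b) (x z : AV b c) (hx : (x.1 : ℕ) = 0 ∨ (x.1 : ℕ) = 4)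
    (h : near x.1 z.1) : 1 / (2 * b + 3) ≤ mu (AG b c) (1 / (2 * b + 3)) x z := by
  have hb' : (0 : ℝ) < b := by exact_mod_cast hb
  rw [mu_near _ _ _ h, deg0 x hx]
  split_ifs
  · rfl
  · rw [le_div_iff₀ hb', le_sub_iff_add_le, div_mul_eq_mul_div, ← add_div, div_le_one (by positivity)]
    linarith

lemma mu2 (hb : 0 < b) (hc : c = b + 2) (x z : AV b c) (hx : (x.1 : ℕ) = 2)
    (h : near x.1 z.1) : mu (AG b c) (1 / (2 * b + 3)) x z ≤ 1 / (2 * b + 3) := by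
  have hb' : (1 : ℝ) ≤ b := by exact_mod_cast hb
  rw [mu_near _ _ _ h, deg2 x hx]
  split_ifs
  · rfl
  · rw [hc]; push_cast
    rw [div_le_iff₀ (by linarith), sub_le_iff_le_add, div_mul_eq_mul_div, ← add_div,
      le_div_iff₀ (by positivity)]
    linarith

lemma edge01 (hb : 0 < b) (hc : c = b + 2) (x y : AV b c) (s : ℝ)
    (h : OR s 0 1 4 3 x.1 y.1) : 1 / 2 ≤ kappaLLY (AG b c) x y := by
  have hb' : (0 : ℝ) < b := by exact_mod_cast hb
  have hc0 : 0 < c := by omega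
  have hadj : (AG b c).Adj x y := by
    rw [at_adj]
    refine ⟨?_, ?_⟩
    · rintro rfl; rcases h with h | h <;> omega
    · unfold near; rcases h with h | h <;> omega
  have hp0 : (0 : ℝ) ≤ 1 / (2 * b + 3) := by positivity
  have hp1 : (1 : ℝ) / (2 * b + 3) < 1 := by rw [div_lt_one (by positivity)]; linarith
  have hx : (x.1 : ℕ) = 0 ∨ (x.1 : ℕ) = 4 := by rcases h with h | h <;> omega
  have hy : (y.1 : ℕ) = 1 ∨ (y.1 : ℕ) = 3 := by rcases h with h | h <;> omega
  have key := le_kappaLLY' (AG b c) (at_conn (a_pos hb hc0) (by norm_num)) hadj hp0 hp1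
    (fun z => s * lev z) ?_ ?_
  · refine le_trans (le_of_eq ?_) key
    rw [lap_smul, lap_smul]
    rcases h with ⟨rfl, h1, h2⟩ | ⟨rfl, h1, h2⟩
    · rw [lap0 hb x h1, lap1 hb y h2, hc]; push_cast; field_simp; ring
    · rw [lap4 hb x h1, lap3 hb y h2, hc]; push_cast; field_simp; ring
  · simp only [lev]
    rcases h with ⟨rfl, h1, h2⟩ | ⟨rfl, h1, h2⟩ <;> rw [h1, h2] <;> norm_num
  · intro u v hu hv
    have nu : near x.1 u.1 := by
      by_contra hn
      rw [mu_far _ _ _ hn] at hu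
      exact absurd hu (not_lt.2 (mu_nonneg _ hp0 hp1.le _ _))
    have nv : near y.1 v.1 := by
      by_contra hn
      rw [mu_far _ _ _ hn] at hv
      exact absurd hv (not_lt.2 (mu_nonneg _ hp0 hp1.le _ _))
    have nv' : ¬ near x.1 v.1 := by
      intro hn
      rw [mu1 hc y v hy nv] at hv
      exact absurd hv (not_lt.2 (mu0 hb x v hx hn))
    have nu' : (u.1 : ℕ) ≠ x.1 := by
      intro hn
      have hn' : x.1 = u.1 := Fin.ext hn.symm
      have hux : u = x := by
        obtain ⟨i, xi⟩ := x
        obtain ⟨j, uj⟩ := u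
        simp only at hn'
        subst hn'
        have : Subsingleton (Fin ((![1, b, c, b, 1] : Fin 5 → ℕ) i)) := by
          have : i = 0 ∨ i = 4 := by
            rcases hx with h | h
            · left; exact Fin.ext h
            · right; exact Fin.ext h
          rcases this with rfl | rfl
          · exact inferInstanceAs (Subsingleton (Fin 1))
          · exact inferInstanceAs (Subsingleton (Fin 1))
        rw [Subsingleton.elim uj xi]
      subst hux
      rw [mu1 hc y u hy ((at_adj _ _).1 hadj.symm).2] at hu
      simp [mu] at hu
    refine dist_le_lev hb hc0 u v s ?_
    unfold near at nu nv nv'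
    rcases h with ⟨rfl, h1, h2⟩ | ⟨rfl, h1, h2⟩
    · left; refine ⟨rfl, ?_⟩; omega
    · right; refine ⟨rfl, ?_⟩; omega

lemma edge12 (hb : 0 < b) (hc : c = b + 2) (x y : AV b c) (s : ℝ)
    (h : OR s 1 2 3 2 x.1 y.1) : 1 / 2 ≤ kappaLLY (AG b c) x y := by
  have hb' : (0 : ℝ) < b := by exact_mod_cast hb
  have hc0 : 0 < c := by omega
  have hadj : (AG b c).Adj x y := by
    rw [at_adj]
    refine ⟨?_, ?_⟩
    · rintro rfl; rcases h with h | h <;> omega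
    · unfold near; rcases h with h | h <;> omega
  have hp0 : (0 : ℝ) ≤ 1 / (2 * b + 3) := by positivity
  have hp1 : (1 : ℝ) / (2 * b + 3) < 1 := by rw [div_lt_one (by positivity)]; linarith
  have hx : (x.1 : ℕ) = 1 ∨ (x.1 : ℕ) = 3 := by rcases h with h | h <;> omega
  have hy : (y.1 : ℕ) = 2 := by rcases h with h | h <;> omega
  have key := le_kappaLLY' (AG b c) (at_conn (a_pos hb hc0) (by norm_num)) hadj hp0 hp1
    (fun z => s * lev z) ?_ ?_
  · refine le_trans (le_of_eq ?_) key
    rw [lap_smul, lap_smul, lap2 hb hc0 y hy]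
    rcases h with ⟨rfl, h1, h2⟩ | ⟨rfl, h1, h2⟩
    · rw [lap1 hb x h1, hc]; push_cast; field_simp; ring
    · rw [lap3 hb x h1, hc]; push_cast; field_simp; ring
  · simp only [lev]
    rcases h with ⟨rfl, h1, h2⟩ | ⟨rfl, h1, h2⟩ <;> rw [h1, h2] <;> norm_num
  · intro u v hu hv
    have nu : near x.1 u.1 := by
      by_contra hn
      rw [mu_far _ _ _ hn] at hu
      exact absurd hu (not_lt.2 (mu_nonneg _ hp0 hp1.le _ _))
    have nv : near y.1 v.1 := by
      by_contra hn
      rw [mu_far _ _ _ hn] at hv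
      exact absurd hv (not_lt.2 (mu_nonneg _ hp0 hp1.le _ _))
    have nv' : ¬ near x.1 v.1 := by
      intro hn
      rw [mu1 hc x v hx hn] at hv
      exact absurd hv (not_lt.2 (mu2 hb hc y v hy nv))
    refine dist_le_lev hb hc0 u v s ?_
    unfold near at nu nv nv'
    rcases h with ⟨rfl, h1, h2⟩ | ⟨rfl, h1, h2⟩
    · left; refine ⟨rfl, ?_⟩; omega
    · right; refine ⟨rfl, ?_⟩; omega

lemma edge_same (hb : 0 < b) (hc : 0 < c) (x y : AV b c) (hadj : (AG b c).Adj x y)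
    (h : (x.1 : ℕ) = y.1) : 1 / 2 ≤ kappaLLY (AG b c) x y := by
  have := one_le_of_twin (AG b c) (at_conn (a_pos hb hc) (by norm_num)) hadj ?_ ?_
  · linarith
  · intro z hx hy
    rw [at_adj, at_adj, h]
    simp [hx.symm, hy.symm]
  · have h1 := deg_AG x
    rw [h, ← deg_AG y] at h1
    exact_mod_cast h1

lemma edge_all (hb : 0 < b) (hc : c = b + 2) (x y : AV b c) (hadj : (AG b c).Adj x y) :
    1 / 2 ≤ kappaLLY (AG b c) x y := by
  have hu := x.1.2
  have hv := y.1.2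
  have key : ∀ x y : AV b c, (x.1 : ℕ) + 1 = y.1 → 1 / 2 ≤ kappaLLY (AG b c) x y := by
    intro x y h
    have hv := y.1.2
    have : (x.1 : ℕ) = 0 ∨ (x.1 : ℕ) = 1 ∨ (x.1 : ℕ) = 2 ∨ (x.1 : ℕ) = 3 := by omega
    rcases this with h1 | h1 | h1 | h1
    · exact edge01 hb hc x y 1 (Or.inl ⟨rfl, by omega, by omega⟩)
    · exact edge12 hb hc x y 1 (Or.inl ⟨rfl, by omega, by omega⟩)
    · rw [kappaLLY_symm]
      exact edge12 hb hc y x (-1) (Or.inr ⟨rfl, by omega, by omega⟩)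
    · rw [kappaLLY_symm]
      exact edge01 hb hc y x (-1) (Or.inr ⟨rfl, by omega, by omega⟩)
  rcases ((at_adj x y).1 hadj).2 with h | h | h
  · exact edge_same hb (by omega) x y hadj h
  · exact key x y h
  · rw [kappaLLY_symm]; exact key y x h

lemma edge_up (hb : 0 < b) (hc : 0 < c) (x y : AV b c) (h : (x.1 : ℕ) + 1 = y.1) :
    (AG b c).Adj x y ∧ kappaLLY (AG b c) x y ≤ lap (AG b c) lev x - lap (AG b c) lev y := by
  have hadj : (AG b c).Adj x y := by
    rw [at_adj]
    refine ⟨?_, Or.inr (Or.inl h)⟩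
    rintro rfl; omega
  refine ⟨hadj, kappaLLY_le _ (at_conn (a_pos hb hc) (by norm_num)) hadj lev ?_ ?_⟩
  · intro u v
    have := at_lip (a_pos hb hc) (by norm_num) 1 (Or.inl rfl) u v
    unfold lev; linarith
  · unfold lev; rw [← h]; push_cast; ring

end AT

/-- The symmetrical antitree `AT(1,b,c,b,1)` is Bonnet-Myers sharp iff
`c = b + 2`. -/
theorem stmt12 (b c : ℕ) (hb : 0 < b) (hc : 0 < c) :
    BMSharp (antitree 5 ![1, b, c, b, 1]) ↔ c = b + 2 := by
  have hb' : (0 : ℝ) < b := by exact_mod_cast hb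
  have hc' : (0 : ℝ) < c := by exact_mod_cast hc
  have ha := a_pos hb hc
  have hd : diam (antitree 5 ![1, b, c, b, 1]) = 4 := diam_AG hb hc
  unfold BMSharp
  rw [hd]
  let x0 : AV b c := ⟨0, ⟨0, ha 0⟩⟩
  let x1 : AV b c := ⟨1, ⟨0, ha 1⟩⟩
  let x2 : AV b c := ⟨2, ⟨0, ha 2⟩⟩
  have h0 : (x0.1 : ℕ) = 0 := rfl
  have h1 : (x1.1 : ℕ) = 1 := rfl
  have h2 : (x2.1 : ℕ) = 2 := rfl
  obtain ⟨a01, k01⟩ := edge_up hb hc x0 x1 (by omega)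
  obtain ⟨a12, k12⟩ := edge_up hb hc x1 x2 (by omega)
  rw [lap0 hb x0 h0, lap1 hb x1 h1] at k01
  rw [lap1 hb x1 h1, lap2 hb hc x2 h2] at k12
  have hbdd : BddBelow {r : ℝ | ∃ x y, (AG b c).Adj x y ∧ r = kappaLLY (AG b c) x y} := by
    apply Set.Finite.bddBelow
    refine (Set.finite_range (fun xy : AV b c × AV b c => kappaLLY (AG b c) xy.1 xy.2)).subset ?_
    rintro r ⟨x, y, -, rfl⟩
    exact ⟨(x, y), rfl⟩
  constructor
  · intro h
    have e1 := csInf_le hbdd ⟨x0, x1, a01, rfl⟩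
    have e2 := csInf_le hbdd ⟨x1, x2, a12, rfl⟩
    rw [h] at e1 e2
    have hpos : (0 : ℝ) < b + c := by positivity
    have f1 : (c - 1 : ℝ) / (b + c) ≤ 1 / 2 := by push_cast at e1; linarith
    have f2 : 1 / 2 ≤ (c - 1 : ℝ) / (b + c) := by push_cast at e2; linarith
    rw [div_le_iff₀ hpos] at f1
    rw [le_div_iff₀ hpos] at f2
    have : (c : ℝ) = b + 2 := by linarith
    exact_mod_cast this
  · intro h
    apply le_antisymm
    · refine (csInf_le hbdd ⟨x0, x1, a01, rfl⟩).trans (k01.trans (le_of_eq ?_))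
      rw [h]; push_cast; field_simp; ring
    · refine le_csInf ⟨_, x0, x1, a01, rfl⟩ ?_
      rintro r ⟨x, y, hxy, rfl⟩
      have := edge_all hb h x y hxy
      refine le_trans (le_of_eq ?_) this
      norm_num
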